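/- arXiv:1110.0807 — 2 statements merged into one kernel-verified Lean document; each statement's English description precedes it below -/
import Mathlib

section
/- Let (X_i) and (Y_i) be sequences of real-valued random variables such that for every p ∈ ℕ, sup_i E[|X_i|^p] < ∞ and sup_i E[|Y_i|^p] < ∞, such that all moments lim_i E[X_i^j] and lim_i E[Y_i^k] exist, and such that X_i and Y_i are weakly asymptotically independent. Then X_i and Y_i are asymptotically independent in moment: for all j, k ∈ ℕ, lim_i E[X_i^j Y_i^k] exists and equals (lim_i E[X_i^j])·(lim_i E[Y_i^k]). -/
open Filter MeasureTheory

/-!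
Weak asymptotic independence passes from `(X, Y)` to `(X ^ j, Y ^ k)`, so it suffices to treat
`E[U V]` for `U` and `V` with bounded third absolute moments. Truncating `U` and `V` at height `R`
gives bounded continuous functions of them, to which weak asymptotic independence applies. Since
`|clamp R x * clamp R y - x * y| ≤ (|x| ^ 3 + |y| ^ 3) / R`, the truncation error is uniform in the
index, and the limits in `R` and in the index may be interchanged.
-/

open scoped Topology BoundedContinuousFunction

section UniformLimits

variable {κ ι β : Type*} [PseudoMetricSpace β] {F : κ → ι → β} {f : ι → β} {p : Filter κ}

lemma tendstoUniformly_of_eventually_dist_le {u : κ → ℝ}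
    (hFf : ∀ᶠ n in p, ∀ i, dist (F n i) (f i) ≤ u n) (hu : Tendsto u p (𝓝 0)) :
    TendstoUniformly F f p := by
  refine Metric.tendstoUniformly_iff.2 fun ε hε => ?_
  filter_upwards [hFf, hu.eventually_lt_const hε] with n hn hun i
  exact (dist_comm (f i) (F n i)).trans_lt ((hn i).trans_lt hun)

lemma tendsto_limits_of_tendstoUniformly {l : Filter ι} [l.NeBot] {L : κ → β} {a : β}
    (hFf : TendstoUniformly F f p) (hF : ∀ n, Tendsto (F n) l (𝓝 (L n)))
    (hf : Tendsto f l (𝓝 a)) : Tendsto L p (𝓝 a) := by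
  refine Metric.nhds_basis_closedBall.tendsto_right_iff.2 fun ε hε => ?_
  filter_upwards [Metric.tendstoUniformly_iff.1 hFf ε hε] with n hn
  refine le_of_tendsto ((hF n).dist hf) (.of_forall fun i => ?_)
  exact (dist_comm (F n i) (f i)).trans_le (hn i).le

end UniformLimits

section Clamp

/-- The truncation of the real line to `[-R, R]`, as a bounded continuous function, so that it can
serve as a test function for weak asymptotic independence. It is meant for `0 ≤ R`; for `R < 0` it
is the constant `-R`. -/
noncomputable def clamp (R : ℝ) : ℝ →ᵇ ℝ :=
  .ofNormedAddCommGroup (fun x => max (-R) (min R x)) (by fun_prop) |R| fun x =>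
    abs_le.2 ⟨(neg_abs_le_neg R).trans (le_max_left _ _),
      max_le (neg_le_abs R) ((min_le_left _ _).trans (le_abs_self R))⟩

variable {R x : ℝ}

lemma clamp_apply (R x : ℝ) : clamp R x = max (-R) (min R x) := rfl

lemma clamp_eq_self (hx : |x| ≤ R) : clamp R x = x := by
  rw [clamp_apply, min_eq_right (abs_le.1 hx).2, max_eq_right (abs_le.1 hx).1]

lemma abs_clamp_le_abs (hR : 0 ≤ R) (x : ℝ) : |clamp R x| ≤ |x| := by
  rw [clamp_apply]
  grind

lemma abs_clamp_sub_self_le_abs (hR : 0 ≤ R) (x : ℝ) : |clamp R x - x| ≤ |x| := by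
  rw [clamp_apply]
  grind

lemma abs_clamp_sub_self_le_pow (hR : 0 < R) (x : ℝ) (p : ℕ) :
    |clamp R x - x| ≤ |x| ^ (p + 1) / R ^ p := by
  rcases le_or_gt |x| R with hx | hx
  · rw [clamp_eq_self hx, sub_self, abs_zero]
    positivity
  · rw [le_div_iff₀ (by positivity), pow_succ']
    exact mul_le_mul (abs_clamp_sub_self_le_abs hR.le x) (pow_le_pow_left₀ hR.le hx.le p)
      (by positivity) (abs_nonneg x)

lemma abs_clamp_mul_clamp_sub_mul_le (hR : 0 < R) (x y : ℝ) :
    |clamp R x * clamp R y - x * y| ≤ (|x| ^ 3 + |y| ^ 3) / R := by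
  have hx : |clamp R x - x| ≤ |x| ^ 2 / R := by simpa using abs_clamp_sub_self_le_pow hR x 1
  have hy : |clamp R y - y| ≤ |y| ^ 2 / R := by simpa using abs_clamp_sub_self_le_pow hR y 1
  calc |clamp R x * clamp R y - x * y|
      = |(clamp R x - x) * clamp R y + x * (clamp R y - y)| := by ring_nf
    _ ≤ |clamp R x - x| * |clamp R y| + |x| * |clamp R y - y| := by
        simpa only [abs_mul] using
          abs_add_le ((clamp R x - x) * clamp R y) (x * (clamp R y - y))
    _ ≤ |x| ^ 2 / R * |y| + |x| * (|y| ^ 2 / R) := by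
        grw [hx, hy, abs_clamp_le_abs hR.le y]
    _ = (|x| ^ 2 * |y| + |x| * |y| ^ 2) / R := by ring
    _ ≤ (|x| ^ 3 + |y| ^ 3) / R := by
        refine div_le_div_of_nonneg_right ?_ hR.le
        nlinarith [mul_nonneg (add_nonneg (abs_nonneg x) (abs_nonneg y)) (sq_nonneg (|x| - |y|))]

end Clamp

section Integral

variable {Ω : Type*} [MeasurableSpace Ω] {μ : Measure Ω}

lemma norm_integral_sub_integral_le {E : Type*} [NormedAddCommGroup E] [NormedSpace ℝ E]
    {f g : Ω → E} {b : Ω → ℝ} (hf : Integrable f μ) (hg : Integrable g μ) (hb : Integrable b μ)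
    (hfg : ∀ ω, ‖f ω - g ω‖ ≤ b ω) : ‖∫ ω, f ω ∂μ - ∫ ω, g ω ∂μ‖ ≤ ∫ ω, b ω ∂μ := by
  rw [← integral_sub hf hg]
  exact norm_integral_le_of_norm_le hb (.of_forall hfg)

lemma memLp_natCast_iff_integrable_norm_pow {E : Type*} [NormedAddCommGroup E] {f : Ω → E}
    (hf : AEStronglyMeasurable f μ) {p : ℕ} (hp : p ≠ 0) :
    MemLp f p μ ↔ Integrable (fun ω => ‖f ω‖ ^ p) μ := by
  simpa using
    (integrable_norm_rpow_iff hf (Nat.cast_ne_zero.2 hp) (ENNReal.natCast_ne_top p)).symm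

lemma memLp_pow_of_integrable_abs_pow {Z : Ω → ℝ} (hZ : AEStronglyMeasurable Z μ) {j p : ℕ}
    (hp : p ≠ 0) (hint : Integrable (fun ω => |Z ω| ^ (j * p)) μ) :
    MemLp (fun ω => Z ω ^ j) p μ := by
  refine (memLp_natCast_iff_integrable_norm_pow (hZ.pow j) hp).2 ?_
  simpa only [Pi.pow_apply, norm_pow, Real.norm_eq_abs, ← pow_mul] using hint

lemma memLp_clamp_comp {R : ℝ} (hR : 0 ≤ R) {U : Ω → ℝ} {p : ENNReal} (hU : MemLp U p μ) :
    MemLp (fun ω => clamp R (U ω)) p μ :=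
  hU.mono ((clamp R).continuous.comp_aestronglyMeasurable hU.1)
    (.of_forall fun ω => abs_clamp_le_abs hR (U ω))

variable [IsFiniteMeasure μ] {U V : Ω → ℝ} {R : ℝ}

lemma integrable_mul_of_two_le {p : ENNReal} (hp : 2 ≤ p) (hU : MemLp U p μ) (hV : MemLp V p μ) :
    Integrable (fun ω => U ω * V ω) μ :=
  (hU.mono_exponent hp).integrable_mul (hV.mono_exponent hp)

lemma abs_integral_clamp_sub_integral_le (hR : 0 < R) {p : ℕ} (hU : MemLp U (p + 1 : ℕ) μ) :
    |∫ ω, clamp R (U ω) ∂μ - ∫ ω, U ω ∂μ| ≤ (∫ ω, |U ω| ^ (p + 1) ∂μ) / R ^ p := by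
  have hp : (1 : ENNReal) ≤ (p + 1 : ℕ) := by simp
  rw [← integral_div]
  exact norm_integral_sub_integral_le ((memLp_clamp_comp hR.le hU).integrable hp)
    (hU.integrable hp) ((hU.integrable_norm_pow p.succ_ne_zero).div_const _)
    fun ω => abs_clamp_sub_self_le_pow hR (U ω) p

lemma abs_integral_clamp_mul_clamp_sub_integral_mul_le (hR : 0 < R) (hU : MemLp U 3 μ)
    (hV : MemLp V 3 μ) :
    |∫ ω, clamp R (U ω) * clamp R (V ω) ∂μ - ∫ ω, U ω * V ω ∂μ| ≤
      (∫ ω, |U ω| ^ 3 ∂μ + ∫ ω, |V ω| ^ 3 ∂μ) / R := by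
  have hU3 : Integrable (fun ω => |U ω| ^ 3) μ := hU.integrable_norm_pow (p := 3) three_ne_zero
  have hV3 : Integrable (fun ω => |V ω| ^ 3) μ := hV.integrable_norm_pow (p := 3) three_ne_zero
  rw [← integral_add hU3 hV3, ← integral_div]
  exact norm_integral_sub_integral_le
    (integrable_mul_of_two_le (by norm_num) (memLp_clamp_comp hR.le hU) (memLp_clamp_comp hR.le hV))
    (integrable_mul_of_two_le (by norm_num) hU hV) ((hU3.add hV3).div_const R)
    fun ω => abs_clamp_mul_clamp_sub_mul_le hR (U ω) (V ω)

end Integral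

section WeaklyAsympIndep

variable {ι : Type*} {l : Filter ι} {Ω : ι → Type*} [∀ i, MeasurableSpace (Ω i)]
  {μ : ∀ i, Measure (Ω i)}

section UniformTruncation

variable [∀ i, IsFiniteMeasure (μ i)] {U V : ∀ i, Ω i → ℝ} {M N : ℝ}

lemma tendstoUniformly_integral_clamp {p : ℕ} (hp : p ≠ 0)
    (hU : ∀ i, MemLp (U i) (p + 1 : ℕ) (μ i)) (hM : ∀ i, ∫ ω, |U i ω| ^ (p + 1) ∂(μ i) ≤ M) :
    TendstoUniformly (fun R i => ∫ ω, clamp R (U i ω) ∂(μ i)) (fun i => ∫ ω, U i ω ∂(μ i))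
      atTop := by
  refine tendstoUniformly_of_eventually_dist_le (u := fun R => M / R ^ p) ?_
    ((tendsto_pow_atTop hp).const_div_atTop M)
  filter_upwards [eventually_gt_atTop 0] with R hR i
  grw [Real.dist_eq, abs_integral_clamp_sub_integral_le hR (hU i), hM i]

lemma tendstoUniformly_integral_clamp_mul_clamp (hU : ∀ i, MemLp (U i) 3 (μ i))
    (hV : ∀ i, MemLp (V i) 3 (μ i)) (hM : ∀ i, ∫ ω, |U i ω| ^ 3 ∂(μ i) ≤ M)
    (hN : ∀ i, ∫ ω, |V i ω| ^ 3 ∂(μ i) ≤ N) :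
    TendstoUniformly (fun R i => ∫ ω, clamp R (U i ω) * clamp R (V i ω) ∂(μ i))
      (fun i => ∫ ω, U i ω * V i ω ∂(μ i)) atTop := by
  refine tendstoUniformly_of_eventually_dist_le (u := fun R => (M + N) / R) ?_
    (tendsto_id.const_div_atTop (M + N))
  filter_upwards [eventually_gt_atTop 0] with R hR i
  grw [Real.dist_eq, abs_integral_clamp_mul_clamp_sub_integral_mul_le hR (hU i) (hV i), hM i, hN i]

end UniformTruncation

variable {E F : Type*} [TopologicalSpace E] [TopologicalSpace F]
  {X : ∀ i, Ω i → E} {Y : ∀ i, Ω i → F}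

/-- Weak asymptotic independence along the filter `l` of two families of random variables, with
values in arbitrary topological spaces and with `X i`, `Y i` defined on a space depending on `i`:
expectations of bounded continuous functions converge, and those of products converge to the
product of the limits. -/
def WeaklyAsympIndep (l : Filter ι) (μ : ∀ i, Measure (Ω i)) (X : ∀ i, Ω i → E)
    (Y : ∀ i, Ω i → F) : Prop :=
  ∀ (f : E →ᵇ ℝ) (g : F →ᵇ ℝ), ∃ a b : ℝ,
    Tendsto (fun i => ∫ ω, f (X i ω) ∂(μ i)) l (𝓝 a) ∧
    Tendsto (fun i => ∫ ω, g (Y i ω) ∂(μ i)) l (𝓝 b) ∧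
    Tendsto (fun i => ∫ ω, f (X i ω) * g (Y i ω) ∂(μ i)) l (𝓝 (a * b))

namespace WeaklyAsympIndep

lemma of_forall_continuous_bounded
    (h : ∀ (f : E → ℝ) (g : F → ℝ), Continuous f → Continuous g →
      (∃ Cf : ℝ, ∀ x, |f x| ≤ Cf) → (∃ Cg : ℝ, ∀ x, |g x| ≤ Cg) →
      ∃ Lf Lg Lfg : ℝ,
        Tendsto (fun i => ∫ ω, f (X i ω) ∂(μ i)) l (𝓝 Lf) ∧
        Tendsto (fun i => ∫ ω, g (Y i ω) ∂(μ i)) l (𝓝 Lg) ∧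
        Tendsto (fun i => ∫ ω, f (X i ω) * g (Y i ω) ∂(μ i)) l (𝓝 Lfg) ∧
        Lfg = Lf * Lg) :
    WeaklyAsympIndep l μ X Y := by
  intro f g
  obtain ⟨a, b, _, ha, hb, hab, rfl⟩ := h f g f.continuous g.continuous
    ⟨‖f‖, f.norm_coe_le_norm⟩ ⟨‖g‖, g.norm_coe_le_norm⟩
  exact ⟨a, b, ha, hb, hab⟩

lemma comp {E' F' : Type*} [TopologicalSpace E'] [TopologicalSpace F'] {φ : E → E'} {ψ : F → F'}
    (h : WeaklyAsympIndep l μ X Y) (hφ : Continuous φ) (hψ : Continuous ψ) :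
    WeaklyAsympIndep l μ (fun i ω => φ (X i ω)) (fun i ω => ψ (Y i ω)) := fun f g =>
  h (f.compContinuous ⟨φ, hφ⟩) (g.compContinuous ⟨ψ, hψ⟩)

theorem tendsto_integral_mul [l.NeBot] [∀ i, IsFiniteMeasure (μ i)] {U V : ∀ i, Ω i → ℝ}
    {M N a b : ℝ} (h : WeaklyAsympIndep l μ U V)
    (hU : ∀ i, MemLp (U i) 3 (μ i)) (hV : ∀ i, MemLp (V i) 3 (μ i))
    (hM : ∀ i, ∫ ω, |U i ω| ^ 3 ∂(μ i) ≤ M) (hN : ∀ i, ∫ ω, |V i ω| ^ 3 ∂(μ i) ≤ N)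
    (ha : Tendsto (fun i => ∫ ω, U i ω ∂(μ i)) l (𝓝 a))
    (hb : Tendsto (fun i => ∫ ω, V i ω ∂(μ i)) l (𝓝 b)) :
    Tendsto (fun i => ∫ ω, U i ω * V i ω ∂(μ i)) l (𝓝 (a * b)) := by
  choose A B hA hB hAB using fun R => h (clamp R) (clamp R)
  have hAa : Tendsto A atTop (𝓝 a) :=
    tendsto_limits_of_tendstoUniformly (tendstoUniformly_integral_clamp two_ne_zero hU hM) hA ha
  have hBb : Tendsto B atTop (𝓝 b) :=
    tendsto_limits_of_tendstoUniformly (tendstoUniformly_integral_clamp two_ne_zero hV hN) hB hb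
  exact (tendstoUniformly_integral_clamp_mul_clamp hU hV hM hN).tendsto_of_eventually_tendsto
    (.of_forall hAB) (hAa.mul hBb)

end WeaklyAsympIndep

theorem asymptotically_independent_in_moment_of_weak_general [l.NeBot]
    [∀ i, IsFiniteMeasure (μ i)] {X Y : ∀ i, Ω i → ℝ} (j k : ℕ) {M N a b : ℝ}
    (hX : ∀ i, AEStronglyMeasurable (X i) (μ i)) (hY : ∀ i, AEStronglyMeasurable (Y i) (μ i))
    (hXint : ∀ i, Integrable (fun ω => |X i ω| ^ (j * 3)) (μ i))
    (hYint : ∀ i, Integrable (fun ω => |Y i ω| ^ (k * 3)) (μ i))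
    (hM : ∀ i, ∫ ω, |X i ω| ^ (j * 3) ∂(μ i) ≤ M)
    (hN : ∀ i, ∫ ω, |Y i ω| ^ (k * 3) ∂(μ i) ≤ N)
    (ha : Tendsto (fun i => ∫ ω, X i ω ^ j ∂(μ i)) l (𝓝 a))
    (hb : Tendsto (fun i => ∫ ω, Y i ω ^ k ∂(μ i)) l (𝓝 b))
    (hweak : WeaklyAsympIndep l μ X Y) :
    Tendsto (fun i => ∫ ω, X i ω ^ j * Y i ω ^ k ∂(μ i)) l (𝓝 (a * b)) :=
  (hweak.comp (continuous_pow j) (continuous_pow k)).tendsto_integral_mul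
    (fun i => memLp_pow_of_integrable_abs_pow (hX i) three_ne_zero (hXint i))
    (fun i => memLp_pow_of_integrable_abs_pow (hY i) three_ne_zero (hYint i))
    (by simpa only [abs_pow, ← pow_mul] using hM) (by simpa only [abs_pow, ← pow_mul] using hN)
    ha hb

end WeaklyAsympIndep

/-- If `(X_i)` and `(Y_i)` have all moments uniformly bounded, all individual moments
converge, and they are weakly asymptotically independent (the expectations of bounded
continuous test functions and their products converge multiplicatively), then they are
asymptotically independent in moment. -/
theorem asymptotically_independent_in_moment_of_weak
    (Ω : ℕ → Type) [∀ i, MeasurableSpace (Ω i)]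
    (μ : ∀ i, Measure (Ω i)) [∀ i, IsProbabilityMeasure (μ i)]
    (X Y : ∀ i, Ω i → ℝ)
    (hXmeas : ∀ i, Measurable (X i)) (hYmeas : ∀ i, Measurable (Y i))
    -- all moments exist (integrability of all powers)
    (hXint : ∀ i, ∀ p : ℕ, Integrable (fun ω => |X i ω| ^ p) (μ i))
    (hYint : ∀ i, ∀ p : ℕ, Integrable (fun ω => |Y i ω| ^ p) (μ i))
    -- uniformly bounded moments
    (hXbdd : ∀ p : ℕ, ∃ M : ℝ, ∀ i, (∫ ω, |X i ω| ^ p ∂(μ i)) ≤ M)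
    (hYbdd : ∀ p : ℕ, ∃ M : ℝ, ∀ i, (∫ ω, |Y i ω| ^ p ∂(μ i)) ≤ M)
    -- the limits of the individual moments exist
    (Lx Ly : ℕ → ℝ)
    (hLx : ∀ j : ℕ, Tendsto (fun i => ∫ ω, (X i ω) ^ j ∂(μ i)) atTop (nhds (Lx j)))
    (hLy : ∀ k : ℕ, Tendsto (fun i => ∫ ω, (Y i ω) ^ k ∂(μ i)) atTop (nhds (Ly k)))
    -- weak asymptotic independence
    (hweak : ∀ f g : ℝ → ℝ, Continuous f → Continuous g →
      (∃ Cf : ℝ, ∀ x, |f x| ≤ Cf) → (∃ Cg : ℝ, ∀ x, |g x| ≤ Cg) →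
      ∃ Lf Lg Lfg : ℝ,
        Tendsto (fun i => ∫ ω, f (X i ω) ∂(μ i)) atTop (nhds Lf) ∧
        Tendsto (fun i => ∫ ω, g (Y i ω) ∂(μ i)) atTop (nhds Lg) ∧
        Tendsto (fun i => ∫ ω, f (X i ω) * g (Y i ω) ∂(μ i)) atTop (nhds Lfg) ∧
        Lfg = Lf * Lg) :
    ∀ j k : ℕ,
      Tendsto (fun i => ∫ ω, (X i ω) ^ j * (Y i ω) ^ k ∂(μ i)) atTop
        (nhds (Lx j * Ly k)) := by
  intro j k
  obtain ⟨M, hM⟩ := hXbdd (j * 3)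
  obtain ⟨N, hN⟩ := hYbdd (k * 3)
  exact asymptotically_independent_in_moment_of_weak_general j k
    (fun i => (hXmeas i).aestronglyMeasurable) (fun i => (hYmeas i).aestronglyMeasurable)
    (fun i => hXint i (j * 3)) (fun i => hYint i (k * 3)) hM hN (hLx j) (hLy k)
    (.of_forall_continuous_bounded hweak)
end

section
/- Fix 1 ≤ q < ∞ and 0 < ε < 1/6, and for each n let λ^n be a partition of n whose number of parts satisfies n(λ^n) ≤ n^ε. Then for every continuous function f : ℝ → ℝ of polynomial growth, E_n[f(ρ̄_q(σ)) | λ(σ) = λ^n] − E_n[f(ρ̄_q(σ))] → 0 as n → ∞, where the conditional expectation is the average of f(ρ̄_q) over the uniform measure on S_n^{λ^n}. -/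
open scoped BigOperators Classical
open Finset Filter

/-- Expectation under the uniform measure on `S_n`. -/
noncomputable def En {n : ℕ} (g : Equiv.Perm (Fin n) → ℝ) : ℝ :=
  (∑ σ : Equiv.Perm (Fin n), g σ) / (Fintype.card (Equiv.Perm (Fin n)) : ℝ)

/-- Variance under the uniform measure on `S_n`. -/
noncomputable def VarN {n : ℕ} (g : Equiv.Perm (Fin n) → ℝ) : ℝ :=
  En (fun σ => (g σ - En g) ^ 2)

/-- Spearman's metric `ρ_q(σ) = Σ_i |σ(i) − i|^q`. -/
noncomputable def rhoq (q : ℝ) {n : ℕ} (σ : Equiv.Perm (Fin n)) : ℝ :=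
  ∑ i : Fin n, |((σ i : ℕ) : ℝ) - ((i : ℕ) : ℝ)| ^ q

/-- Normalized Spearman's metric `ρ̄_q = (ρ_q − E ρ_q)/√(Var ρ_q)`. -/
noncomputable def rhoqBar (q : ℝ) {n : ℕ} (σ : Equiv.Perm (Fin n)) : ℝ :=
  (rhoq q σ - En (rhoq q (n := n))) / Real.sqrt (VarN (rhoq q (n := n)))

/-- Conditional expectation given cycle type `λ`: the average over `S_n^λ`. -/
noncomputable def EnCond {n : ℕ} (lam : (Fintype.card (Fin n)).Partition)
    (g : Equiv.Perm (Fin n) → ℝ) : ℝ :=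
  (∑ σ ∈ Finset.univ.filter (fun σ : Equiv.Perm (Fin n) => σ.partition = lam), g σ) /
    ((Finset.univ.filter (fun σ : Equiv.Perm (Fin n) => σ.partition = lam)).card : ℝ)

/-!
Let `c τ` be the number of cycles of `τ`. Multiplying `τ` by a cycle through one point of each of
its cycles produces a single `n`-cycle at Hamming distance at most `c τ`, and all `n`-cycles are
conjugate; so any `σ` and `τ` can be conjugated to within distance `c σ + c τ` of one another. As
the uniform measure is conjugation invariant, this couples the uniform measure on the conjugacy
class of `τ` to the uniform measure on `S_n` at mean Hamming distance at most `c τ + H_n`, where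
`H_n`, the harmonic number, bounds the mean number of cycles.

Spearman's metric `ρ_q` is Lipschitz for the Hamming distance with constant `n ^ q`, and an
exchangeable pair argument bounds its variance below by a constant times `n ^ (2q + 1)`. Hence
`ρ̄_q` has Lipschitz constant `O(n ^ (-1/2))`, and the coupling moves it by `o(1)` on average as
soon as `c τ = o(√n)`. Test functions of polynomial growth are truncated by moment bounds, uniform
in `n`: revealing a permutation one image at a time and applying Hoeffding's lemma to each
increment shows that a Lipschitz function with constant `O(n ^ (-1/2))` is sub-Gaussian, and
`w ↦ ρ̄_q (w * τ * w⁻¹)` is Lipschitz as well.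
-/

section Averaging

variable {G X : Type*} [Group G] [Fintype G] [MulAction G X]

theorem expect_smul_eq_expect_of_coe_eq_orbit {x : X} {s : Finset X}
    (hs : (s : Set X) = MulAction.orbit G x) (f : X → ℝ) :
    𝔼 g : G, f (g • x) = 𝔼 y ∈ s, f y := by
  have mem_s (y : X) : y ∈ s ↔ y ∈ MulAction.orbit G x := by rw [← hs, mem_coe]
  have avg_const : ∀ y ∈ s, 𝔼 g : G, f (g • y) = 𝔼 g : G, f (g • x) := by
    intro y hy
    obtain ⟨h, rfl⟩ := (mem_s y).1 hy
    exact Fintype.expect_equiv (Equiv.mulRight h) _ _ fun g => by simp [mul_smul]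
  have avg_translate (g : G) : 𝔼 y ∈ s, f (g • y) = 𝔼 y ∈ s, f y :=
    expect_equiv (MulAction.toPerm g) (fun y => by
      rw [mem_s, mem_s, MulAction.toPerm_apply, ← MulAction.orbit_eq_iff, ← MulAction.orbit_eq_iff,
        MulAction.orbit_smul]) fun y _ => rfl
  have hs_nonempty : s.Nonempty := ⟨x, (mem_s x).2 (MulAction.mem_orbit_self x)⟩
  calc 𝔼 g : G, f (g • x) = 𝔼 y ∈ s, 𝔼 g : G, f (g • y) := by
        rw [expect_congr rfl avg_const, expect_const hs_nonempty]
    _ = 𝔼 g : G, 𝔼 y ∈ s, f (g • y) := expect_comm ..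
    _ = 𝔼 y ∈ s, f y := by simp only [avg_translate, Fintype.expect_const]

end Averaging

section Hamming

open Equiv

variable {α : Type*} [Fintype α] [DecidableEq α]

theorem hammingDist_mul_left (s u v : Perm α) :
    hammingDist ⇑(s * u) ⇑(s * v) = hammingDist ⇑u ⇑v := by
  simp [hammingDist]

theorem hammingDist_mul_right (s u v : Perm α) :
    hammingDist ⇑(u * s) ⇑(v * s) = hammingDist ⇑u ⇑v := by
  unfold hammingDist
  exact card_equiv s fun i => by
    rw [mem_filter_univ, mem_filter_univ, Perm.mul_apply, Perm.mul_apply]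

theorem hammingDist_mul_self_right (s u : Perm α) :
    hammingDist ⇑(s * u) ⇑u = #s.support := by
  conv_lhs => rw [← one_mul u, ← mul_assoc, hammingDist_mul_right, mul_one]
  rfl

theorem hammingDist_swap_mul_le (i j : α) (u : Perm α) :
    hammingDist ⇑(swap i j * u) ⇑u ≤ 2 := by
  rw [hammingDist_mul_self_right]
  rcases eq_or_ne i j with rfl | hij
  · simp
  · exact (Perm.card_support_swap hij).le

theorem hammingDist_inv (u v : Perm α) :
    hammingDist ⇑u⁻¹ ⇑v⁻¹ = hammingDist ⇑u ⇑v := by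
  rw [← hammingDist_mul_left u, ← hammingDist_mul_right v]
  simp [mul_assoc, hammingDist_comm]

theorem hammingDist_conj_conj_le (τ v w : Perm α) :
    hammingDist ⇑(v * τ * v⁻¹) ⇑(w * τ * w⁻¹) ≤ 2 * hammingDist ⇑v ⇑w := by
  calc hammingDist ⇑(v * τ * v⁻¹) ⇑(w * τ * w⁻¹)
      ≤ hammingDist ⇑(v * τ * v⁻¹) ⇑(v * τ * w⁻¹) + hammingDist ⇑(v * τ * w⁻¹) ⇑(w * τ * w⁻¹) :=
        hammingDist_triangle ..
    _ = 2 * hammingDist ⇑v ⇑w := by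
        rw [hammingDist_mul_left, hammingDist_inv, hammingDist_mul_right, hammingDist_mul_right,
          two_mul]

/-- `F` is Lipschitz with constant `L` for the Hamming distance between permutations: this is the
regularity under which functions on the symmetric group concentrate and feel only the number of
cycles of their argument. -/
def IsHammingLipschitz (L : ℝ) (F : Perm α → ℝ) : Prop :=
  ∀ σ τ, |F σ - F τ| ≤ L * hammingDist ⇑σ ⇑τ

theorem IsHammingLipschitz.comp_conj {L : ℝ} {F : Perm α → ℝ} (hL : 0 ≤ L)
    (hF : IsHammingLipschitz L F) (τ : Perm α) :
    IsHammingLipschitz (2 * L) fun w => F (w * τ * w⁻¹) := by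
  intro v w
  calc |F (v * τ * v⁻¹) - F (w * τ * w⁻¹)|
      ≤ L * hammingDist ⇑(v * τ * v⁻¹) ⇑(w * τ * w⁻¹) := hF _ _
    _ ≤ L * ↑(2 * hammingDist ⇑v ⇑w) := by gcongr; exact hammingDist_conj_conj_le τ v w
    _ = 2 * L * hammingDist ⇑v ⇑w := by push_cast; ring

end Hamming

section Cycles

open Equiv Equiv.Perm

theorem sameCycle_setoid_le {α : Type*} {e : Perm α} {s : Setoid α} (h : ∀ x, s x (e x)) :
    SameCycle.setoid e ≤ s := by
  rintro x _ ⟨k, rfl⟩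
  induction k with
  | zero => exact s.refl x
  | succ k ih =>
    rw [add_comm, zpow_one_add, mul_apply]
    exact s.trans ih (h _)
  | pred k ih =>
    refine s.trans ih (s.symm ?_)
    simpa [← mul_apply, ← zpow_one_add] using h ((e ^ (-(k : ℤ) - 1)) x)

/-- The number of cycles of `σ`, fixed points included. -/
noncomputable def cycleCount {α : Type*} (σ : Perm α) : ℕ :=
  Nat.card (Quotient (SameCycle.setoid σ))

variable {α : Type*}

-- If `p` moves at most one point of each cycle of `σ`, then passing from `σ` to `p * σ` only merges
-- cycles.
theorem sameCycle_mul_pow_apply {p σ : Perm α}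
    (hp : ∀ x y, p x ≠ x → p y ≠ y → σ.SameCycle x y → x = y) {r : α} (hr : p r ≠ r) (k : ℕ) :
    (p * σ).SameCycle r ((σ ^ k) r) := by
  induction k with
  | zero => exact SameCycle.refl _ _
  | succ k ih =>
    by_cases hk : p ((σ ^ (k + 1)) r) = (σ ^ (k + 1)) r
    · have hstep : (p * σ) ((σ ^ k) r) = (σ ^ (k + 1)) r := by
        rwa [pow_succ', mul_apply] at hk ⊢
      rw [← hstep]
      exact sameCycle_apply_right.2 ih
    · rw [← hp r _ hr hk (sameCycle_pow_right.2 (SameCycle.refl _ _))]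

theorem sameCycle_mul_of_sameCycle_right [Finite α] {p σ : Perm α}
    (hp : ∀ x y, p x ≠ x → p y ≠ y → σ.SameCycle x y → x = y) {x y : α} (h : σ.SameCycle x y) :
    (p * σ).SameCycle x y := by
  refine sameCycle_setoid_le (s := SameCycle.setoid (p * σ)) (fun x => ?_) h
  change (p * σ).SameCycle x (σ x)
  by_cases hx : p (σ x) = σ x
  · rw [← hx]
    exact sameCycle_apply_right.2 (SameCycle.refl (p * σ) x)
  · obtain ⟨k, -, hk⟩ := (sameCycle_apply_left.2 (SameCycle.refl σ x)).exists_pow_eq'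
    simpa only [hk] using (sameCycle_mul_pow_apply hp hx k).symm

theorem sameCycle_mul_of_sameCycle_left [Finite α] {p σ : Perm α}
    (hp : ∀ x y, p x ≠ x → p y ≠ y → σ.SameCycle x y → x = y) {x y : α} (h : p.SameCycle x y) :
    (p * σ).SameCycle x y := by
  refine sameCycle_setoid_le (s := SameCycle.setoid (p * σ)) (fun x => ?_) h
  change (p * σ).SameCycle x (p x)
  have hback : (p * σ).SameCycle (σ⁻¹ x) x :=
    sameCycle_mul_of_sameCycle_right hp (sameCycle_symm_apply_left.2 (SameCycle.refl σ x))
  simpa using sameCycle_apply_right.2 hback.symm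

theorem isConj_of_isCycleOn_univ [Finite α] {c d : Perm α} (hc : c.IsCycleOn Set.univ)
    (hd : d.IsCycleOn Set.univ) : IsConj c d := by
  cases nonempty_fintype α
  cases subsingleton_or_nontrivial α
  · rw [Subsingleton.elim c d]
  · have isCycle_and_support (c : Perm α) (hc : c.IsCycleOn Set.univ) :
        c.IsCycle ∧ c.support = univ := by
      have hne (x : α) : c x ≠ x := hc.apply_ne Set.nontrivial_univ (Set.mem_univ x)
      obtain ⟨x⟩ := ‹Nontrivial α›.to_nonempty
      exact ⟨⟨x, hne x, fun y _ => hc.2 trivial trivial⟩, by ext x; simp [hne x]⟩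
    obtain ⟨hc_cycle, hc_support⟩ := isCycle_and_support c hc
    obtain ⟨hd_cycle, hd_support⟩ := isCycle_and_support d hd
    exact hc_cycle.isConj hd_cycle (by rw [hc_support, hd_support])

variable [Fintype α] [DecidableEq α]

/-- A transversal of the cycles of `σ`: one chosen point in each cycle. -/
noncomputable def cycleReps (σ : Perm α) : Finset α :=
  univ.image fun q : Quotient (SameCycle.setoid σ) => q.out

theorem card_cycleReps (σ : Perm α) : #(cycleReps σ) = cycleCount σ := by
  rw [cycleReps, card_image_of_injective _ Quotient.out_injective, cycleCount,
    Nat.card_eq_fintype_card, card_univ]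

theorem exists_mem_cycleReps_sameCycle (σ : Perm α) (x : α) :
    ∃ r ∈ cycleReps σ, σ.SameCycle r x :=
  ⟨_, mem_image_of_mem _ (mem_univ _), Quotient.mk_out (s := SameCycle.setoid σ) x⟩

theorem eq_of_mem_cycleReps_of_sameCycle {σ : Perm α} {x y : α} (hx : x ∈ cycleReps σ)
    (hy : y ∈ cycleReps σ) (hxy : σ.SameCycle x y) : x = y := by
  obtain ⟨q, -, rfl⟩ := mem_image.1 hx
  obtain ⟨q', -, rfl⟩ := mem_image.1 hy
  rw [Quotient.out_equiv_out (s := SameCycle.setoid σ).1 hxy]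

theorem exists_isCycleOn_univ_hammingDist_le (σ : Perm α) :
    ∃ c : Perm α, c.IsCycleOn Set.univ ∧ hammingDist ⇑c ⇑σ ≤ cycleCount σ := by
  obtain ⟨p, hp, hsupp⟩ := (cycleReps σ).exists_cycleOn
  have htrans : ∀ x y, p x ≠ x → p y ≠ y → σ.SameCycle x y → x = y := fun x y hx hy =>
    eq_of_mem_cycleReps_of_sameCycle (hsupp (mem_support.2 hx)) (hsupp (mem_support.2 hy))
  refine ⟨p * σ, ⟨Set.bijOn_univ.2 (p * σ).bijective, fun x _ y _ => ?_⟩, ?_⟩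
  · obtain ⟨r, hr, hrx⟩ := exists_mem_cycleReps_sameCycle σ x
    obtain ⟨s, hs, hsy⟩ := exists_mem_cycleReps_sameCycle σ y
    have hrs := sameCycle_mul_of_sameCycle_left htrans (hp.2 hr hs)
    exact ((sameCycle_mul_of_sameCycle_right htrans hrx).symm.trans hrs).trans
      (sameCycle_mul_of_sameCycle_right htrans hsy)
  · calc hammingDist ⇑(p * σ) ⇑σ = #p.support := hammingDist_mul_self_right p σ
      _ ≤ #(cycleReps σ) := card_le_card hsupp
      _ = cycleCount σ := card_cycleReps σ

theorem exists_hammingDist_conj_le (σ τ : Perm α) :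
    ∃ v : Perm α, hammingDist ⇑σ ⇑(v * τ * v⁻¹) ≤ cycleCount σ + cycleCount τ := by
  obtain ⟨c, hc, hcσ⟩ := exists_isCycleOn_univ_hammingDist_le σ
  obtain ⟨d, hd, hdτ⟩ := exists_isCycleOn_univ_hammingDist_le τ
  obtain ⟨v, rfl⟩ := isConj_iff.1 (isConj_of_isCycleOn_univ hd hc)
  refine ⟨v, (hammingDist_triangle _ ⇑(v * d * v⁻¹) _).trans (add_le_add ?_ ?_)⟩
  · rwa [hammingDist_comm]
  · rwa [hammingDist_mul_right, hammingDist_mul_left]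

theorem cycleCount_le_card_parts_partition (τ : Perm α) :
    cycleCount τ ≤ Multiset.card τ.partition.parts := by
  have card_moved : #{x ∈ cycleReps τ | x ∈ τ.support} ≤ #τ.cycleFactorsFinset := by
    refine card_le_card_of_injOn τ.cycleOf (fun x hx => ?_) fun x hx y hy hxy => ?_
    · exact cycleOf_mem_cycleFactorsFinset_iff.2 (mem_filter.1 hx).2
    · obtain ⟨⟨hx, hxτ⟩, hy, hyτ⟩ := And.intro (mem_filter.1 hx) (mem_filter.1 hy)
      exact eq_of_mem_cycleReps_of_sameCycle hx hy
        ((sameCycle_iff_cycleOf_eq_of_mem_support hxτ hyτ).2 hxy)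
  have card_fixed : #{x ∈ cycleReps τ | x ∉ τ.support} ≤ #τ.supportᶜ :=
    card_le_card fun x hx => mem_compl.2 (mem_filter.1 hx).2
  calc cycleCount τ = #(cycleReps τ) := (card_cycleReps τ).symm
    _ = #{x ∈ cycleReps τ | x ∈ τ.support} + #{x ∈ cycleReps τ | x ∉ τ.support} :=
        (card_filter_add_card_filter_not _).symm
    _ ≤ #τ.cycleFactorsFinset + #τ.supportᶜ := add_le_add card_moved card_fixed
    _ = Multiset.card τ.partition.parts := by
        rw [parts_partition, Multiset.card_add, Multiset.card_replicate, cycleType_def,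
          Multiset.card_map, card_compl]
        rfl

end Cycles

section Conjugation

variable {G : Type*} [Group G] [Fintype G]

theorem expect_conj_eq_expect_isConj (τ : G) (g : G → ℝ) :
    𝔼 w : G, g (w * τ * w⁻¹) = 𝔼 σ with IsConj σ τ, g σ :=
  (Fintype.expect_equiv ConjAct.toConjAct.toEquiv _ _ fun _ => rfl).trans <|
    expect_smul_eq_expect_of_coe_eq_orbit (G := ConjAct G) (by
      ext σ
      simp [ConjAct.mem_orbit_conjAct]) g

theorem expect_conj_conj (v τ : G) (g : G → ℝ) :
    𝔼 w : G, g (w * (v * τ * v⁻¹) * w⁻¹) = 𝔼 w : G, g (w * τ * w⁻¹) :=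
  Fintype.expect_equiv (Equiv.mulRight v) _ _ fun w => by simp [mul_assoc]

theorem expect_expect_conj (g : G → ℝ) : 𝔼 σ : G, 𝔼 w : G, g (w * σ * w⁻¹) = 𝔼 σ, g σ := by
  rw [expect_comm]
  have avg_conj (w : G) : 𝔼 σ : G, g (w * σ * w⁻¹) = 𝔼 σ, g σ :=
    Fintype.expect_equiv (MulAut.conj w).toEquiv _ _ fun _ => rfl
  simp only [avg_conj, Fintype.expect_const]

end Conjugation

section Coupling

open Equiv

variable {α : Type*} [Fintype α] [DecidableEq α]

-- Couple `w * τ * w⁻¹` with `w * σ * w⁻¹`, where first `τ` is conjugated to lie close to `σ`.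
theorem abs_expect_conj_sub_expect_le {g h : Perm α → ℝ} {M : ℝ} (hM : 0 ≤ M)
    (hg : ∀ σ τ, |g σ - g τ| ≤ h σ + h τ + M * hammingDist ⇑σ ⇑τ) (τ : Perm α) :
    |𝔼 w, g (w * τ * w⁻¹) - 𝔼 σ, g σ| ≤
      𝔼 w, h (w * τ * w⁻¹) + 𝔼 σ, h σ + M * (cycleCount τ + 𝔼 σ : Perm α, (cycleCount σ : ℝ)) := by
  choose v hv using fun σ => exists_hammingDist_conj_le σ τ
  have pointwise (σ w : Perm α) :
      |g (w * (v σ * τ * (v σ)⁻¹) * w⁻¹) - g (w * σ * w⁻¹)| ≤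
        h (w * (v σ * τ * (v σ)⁻¹) * w⁻¹) + h (w * σ * w⁻¹) +
          M * (cycleCount τ + cycleCount σ) := by
    refine (hg _ _).trans ?_
    rw [hammingDist_mul_right, hammingDist_mul_left, hammingDist_comm, add_comm (cycleCount τ : ℝ)]
    gcongr
    exact_mod_cast hv σ
  calc |𝔼 w, g (w * τ * w⁻¹) - 𝔼 σ, g σ|
      = |𝔼 σ, 𝔼 w, (g (w * (v σ * τ * (v σ)⁻¹) * w⁻¹) - g (w * σ * w⁻¹))| := by
        simp only [expect_sub_distrib, expect_conj_conj, expect_expect_conj, Fintype.expect_const]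
    _ ≤ 𝔼 σ, 𝔼 w, |g (w * (v σ * τ * (v σ)⁻¹) * w⁻¹) - g (w * σ * w⁻¹)| :=
        (abs_expect_le _ _).trans (expect_le_expect fun σ _ => abs_expect_le _ _)
    _ ≤ 𝔼 σ, 𝔼 w, (h (w * (v σ * τ * (v σ)⁻¹) * w⁻¹) + h (w * σ * w⁻¹) +
          M * (cycleCount τ + cycleCount σ)) :=
        expect_le_expect fun σ _ => expect_le_expect fun w _ => pointwise σ w
    _ = _ := by
        simp only [expect_add_distrib, expect_conj_conj, expect_expect_conj, Fintype.expect_const,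
          ← mul_expect]

variable {L : ℝ} {F : Perm α → ℝ}

theorem IsHammingLipschitz.abs_expect_conj_sub_expect_le (hL : 0 ≤ L) (hF : IsHammingLipschitz L F)
    (τ : Perm α) :
    |𝔼 w, F (w * τ * w⁻¹) - 𝔼 σ, F σ| ≤
      L * (cycleCount τ + 𝔼 σ : Perm α, (cycleCount σ : ℝ)) := by
  simpa using _root_.abs_expect_conj_sub_expect_le (h := 0) hL
    (fun σ σ' => by simpa using hF σ σ') τ

theorem IsHammingLipschitz.abs_expect_comp_conj_sub_expect_comp_le (hL : 0 ≤ L)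
    (hF : IsHammingLipschitz L F) {f : ℝ → ℝ} {δ M : ℝ} {k : ℕ} (hM : 0 ≤ M)
    (hf : ∀ x y, |f x - f y| ≤ δ * (1 + x ^ k + y ^ k) + M * |x - y|) (τ : Perm α) :
    |𝔼 w, f (F (w * τ * w⁻¹)) - 𝔼 σ, f (F σ)| ≤
      δ * (1 + 𝔼 σ, F σ ^ k + 𝔼 w, F (w * τ * w⁻¹) ^ k) +
        M * (L * (cycleCount τ + 𝔼 σ : Perm α, (cycleCount σ : ℝ))) := by
  have hcouple := _root_.abs_expect_conj_sub_expect_le (g := fun σ => f (F σ))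
    (h := fun σ => δ * (1 / 2 + F σ ^ k)) (mul_nonneg hM hL) (fun σ σ' => ?_) τ
  · simp only [← mul_expect, expect_add_distrib, Fintype.expect_const] at hcouple
    linarith
  · calc |f (F σ) - f (F σ')| ≤ δ * (1 + F σ ^ k + F σ' ^ k) + M * |F σ - F σ'| := hf _ _
      _ ≤ δ * (1 + F σ ^ k + F σ' ^ k) + M * (L * hammingDist ⇑σ ⇑σ') := by
          gcongr
          exact hF σ σ'
      _ = _ := by ring

end Coupling

section FinDecomposition

open Equiv Equiv.Perm

variable {n : ℕ}

theorem expect_perm_fin_succ (g : Perm (Fin (n + 1)) → ℝ) :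
    𝔼 σ, g σ = 𝔼 p, 𝔼 e, g (decomposeFin.symm (p, e)) := by
  rw [← expect_product', univ_product_univ]
  exact Fintype.expect_equiv decomposeFin _ _ fun σ => by simp

theorem decomposeFin_symm_eq_swap_mul (p : Fin (n + 1)) (e : Perm (Fin n)) :
    decomposeFin.symm (p, e) = swap 0 p * decomposeFin.symm (0, e) := by
  ext i
  cases i using Fin.cases <;> simp

theorem sameCycle_decomposeFin_symm_succ (p : Fin (n + 1)) {e : Perm (Fin n)} {x y : Fin n}
    (h : e.SameCycle x y) : (decomposeFin.symm (p, e)).SameCycle x.succ y.succ := by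
  set g := decomposeFin.symm (p, e) with hg
  refine sameCycle_setoid_le (s := (SameCycle.setoid g).comap Fin.succ) (fun x => ?_) h
  change g.SameCycle x.succ (e x).succ
  have hx : g x.succ = swap 0 p (e x).succ := decomposeFin_symm_apply_succ e p x
  by_cases hp : (e x).succ = p
  · have hgg : g (g x.succ) = (e x).succ := by
      rw [hx, hp, swap_apply_right, hg, decomposeFin_symm_apply_zero]
    rw [← hgg, sameCycle_apply_right, sameCycle_apply_right]
  · rw [swap_apply_of_ne_of_ne (Fin.succ_ne_zero _) hp] at hx
    rw [← hx, sameCycle_apply_right]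

theorem cycleCount_decomposeFin_symm_le (p : Fin (n + 1)) (e : Perm (Fin n)) :
    cycleCount (decomposeFin.symm (p, e)) ≤ cycleCount e + if p = 0 then 1 else 0 := by
  set g := decomposeFin.symm (p, e) with hg
  let succClass : Quotient (SameCycle.setoid e) → Quotient (SameCycle.setoid g) :=
    Quotient.map Fin.succ fun _ _ h => sameCycle_decomposeFin_symm_succ p h
  split_ifs with hp
  · have hsurj : Function.Surjective fun o : Option (Quotient (SameCycle.setoid e)) =>
        o.elim (Quotient.mk _ 0) succClass := by
      refine Quotient.ind fun y => ?_
      cases y using Fin.cases with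
      | zero => exact ⟨none, rfl⟩
      | succ y => exact ⟨some (Quotient.mk _ y), rfl⟩
    exact (Nat.card_le_card_of_surjective _ hsurj).trans Finite.card_option.le
  · obtain ⟨a, rfl⟩ := Fin.exists_succ_eq_of_ne_zero hp
    have hsurj : Function.Surjective succClass := by
      refine Quotient.ind fun y => ?_
      cases y using Fin.cases with
      | zero =>
        refine ⟨Quotient.mk _ a, Quotient.sound ?_⟩
        change g.SameCycle a.succ 0
        rw [← sameCycle_apply_right, hg, decomposeFin_symm_apply_zero]
      | succ y => exact ⟨Quotient.mk _ y, rfl⟩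
    exact Nat.card_le_card_of_surjective _ hsurj

theorem expect_cycleCount_le_harmonic (n : ℕ) :
    𝔼 σ : Perm (Fin n), (cycleCount σ : ℝ) ≤ (harmonic n : ℝ) := by
  induction n with
  | zero => simp [cycleCount]
  | succ n ih =>
    calc 𝔼 σ : Perm (Fin (n + 1)), (cycleCount σ : ℝ)
        = 𝔼 p, 𝔼 e, (cycleCount (decomposeFin.symm (p, e)) : ℝ) := expect_perm_fin_succ _
      _ ≤ 𝔼 p : Fin (n + 1), 𝔼 e : Perm (Fin n), (cycleCount e + if p = 0 then 1 else 0 : ℝ) := by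
          refine expect_le_expect fun p _ => expect_le_expect fun e _ => ?_
          exact_mod_cast cycleCount_decomposeFin_symm_le p e
      _ = 𝔼 e : Perm (Fin n), (cycleCount e : ℝ) + (n + 1 : ℝ)⁻¹ := by
          simp [expect_add_distrib, Fintype.expect_eq_sum_div_card]
      _ ≤ harmonic (n + 1) := by
          rw [harmonic_succ]
          push_cast
          gcongr

end FinDecomposition

section CycleType

theorem exists_partition_eq {α : Type*} [Fintype α] [DecidableEq α]
    (lam : (Fintype.card α).Partition) : ∃ τ : Equiv.Perm α, τ.partition = lam := by
  set large := lam.parts.filter (2 ≤ ·)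
  set small := lam.parts.filter (¬2 ≤ ·)
  have hparts : large + small = lam.parts := Multiset.filter_add_not _ _
  have small_eq : small = Multiset.replicate small.card 1 := by
    refine Multiset.eq_replicate.2 ⟨rfl, fun b hb => ?_⟩
    obtain ⟨hb_mem, hb_lt⟩ := Multiset.mem_filter.1 hb
    have := lam.parts_pos hb_mem
    omega
  have card_eq : large.sum + small.card = Fintype.card α := by
    rw [← lam.parts_sum, ← hparts, Multiset.sum_add, small_eq]
    simp
  obtain ⟨τ, hτ⟩ := (Equiv.Perm.exists_with_cycleType_iff α (m := large)).2
    ⟨by omega, fun a ha => (Multiset.mem_filter.1 ha).2⟩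
  refine ⟨τ, Nat.Partition.ext ?_⟩
  rw [Equiv.Perm.parts_partition, ← Equiv.Perm.sum_cycleType, hτ, ← hparts, ← card_eq,
    Nat.add_sub_cancel_left, ← small_eq]

theorem En_eq_expect {n : ℕ} (g : Equiv.Perm (Fin n) → ℝ) : En g = 𝔼 σ, g σ :=
  (Fintype.expect_eq_sum_div_card g).symm

theorem EnCond_partition_eq_expect_conj {n : ℕ} (τ : Equiv.Perm (Fin n))
    (g : Equiv.Perm (Fin n) → ℝ) : EnCond τ.partition g = 𝔼 w, g (w * τ * w⁻¹) := by
  rw [expect_conj_eq_expect_isConj, expect_eq_sum_div_card]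
  simp only [Equiv.Perm.partition_eq_of_isConj]
  rfl

end CycleType

section Concentration

open Equiv Equiv.Perm ProbabilityTheory

theorem integral_uniformOfFintype_eq_expect {ι : Type*} [Fintype ι] [Nonempty ι]
    [MeasurableSpace ι] [MeasurableSingletonClass ι] (X : ι → ℝ) :
    ∫ i, X i ∂(PMF.uniformOfFintype ι).toMeasure = 𝔼 i, X i := by
  simp [PMF.integral_eq_sum, Fintype.expect_eq_sum_div_card, ← mul_sum, div_eq_inv_mul]

theorem expect_exp_mul_sub_expect_le {ι : Type*} [Fintype ι] [Nonempty ι] {X : ι → ℝ} {a b : ℝ}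
    (hX : ∀ i, X i ∈ Set.Icc a b) (t : ℝ) :
    𝔼 i, Real.exp (t * (X i - 𝔼 j, X j)) ≤ Real.exp ((b - a) ^ 2 * t ^ 2 / 8) := by
  let _ : MeasurableSpace ι := ⊤
  have h := (hasSubgaussianMGF_of_mem_Icc (μ := (PMF.uniformOfFintype ι).toMeasure)
    (measurable_from_top (f := X)).aemeasurable (.of_forall hX)).mgf_le t
  simp only [mgf, integral_uniformOfFintype_eq_expect] at h
  refine h.trans_eq (congrArg Real.exp ?_)
  push_cast
  rw [div_pow, Real.norm_eq_abs, sq_abs]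
  ring

variable {n : ℕ} {L : ℝ}

theorem hammingDist_decomposeFin_symm_le (p : Fin (n + 1)) (d e : Perm (Fin n)) :
    hammingDist ⇑(decomposeFin.symm (p, d)) ⇑(decomposeFin.symm (p, e)) ≤ hammingDist ⇑d ⇑e := by
  rw [decomposeFin_symm_eq_swap_mul p d, decomposeFin_symm_eq_swap_mul p e, hammingDist_mul_left]
  unfold hammingDist
  calc #{i | decomposeFin.symm (0, d) i ≠ decomposeFin.symm (0, e) i}
      ≤ #(({i | d i ≠ e i} : Finset (Fin n)).image Fin.succ) := by
        refine card_le_card fun i => ?_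
        cases i using Fin.cases <;> simp
    _ ≤ #{i | d i ≠ e i} := card_image_le

theorem IsHammingLipschitz.comp_decomposeFin_symm {F : Perm (Fin (n + 1)) → ℝ} (hL : 0 ≤ L)
    (hF : IsHammingLipschitz L F) (p : Fin (n + 1)) :
    IsHammingLipschitz L fun e => F (decomposeFin.symm (p, e)) := fun d e =>
  (hF _ _).trans (by gcongr; exact hammingDist_decomposeFin_symm_le p d e)

theorem IsHammingLipschitz.abs_expect_decomposeFin_sub_le {F : Perm (Fin (n + 1)) → ℝ}
    (hL : 0 ≤ L) (hF : IsHammingLipschitz L F) (p : Fin (n + 1)) :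
    |𝔼 e, F (decomposeFin.symm (p, e)) - 𝔼 e, F (decomposeFin.symm (0, e))| ≤ 2 * L := by
  rw [← expect_sub_distrib]
  refine (abs_expect_le _ _).trans (expect_le univ_nonempty fun e _ => (hF _ _).trans ?_)
  rw [mul_comm, decomposeFin_symm_eq_swap_mul p e]
  gcongr
  exact_mod_cast hammingDist_swap_mul_le 0 p _

theorem IsHammingLipschitz.expect_exp_le (hL : 0 ≤ L) {n : ℕ} {F : Perm (Fin n) → ℝ}
    (hF : IsHammingLipschitz L F) (t : ℝ) :
    𝔼 σ, Real.exp (t * (F σ - 𝔼 τ, F τ)) ≤ Real.exp (2 * n * t ^ 2 * L ^ 2) := by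
  induction n with
  | zero => simp
  | succ n ih =>
    let m (p : Fin (n + 1)) : ℝ := 𝔼 e, F (decomposeFin.symm (p, e))
    have mean_eq : 𝔼 σ, F σ = 𝔼 p, m p := expect_perm_fin_succ F
    have m_mem (p : Fin (n + 1)) : m p ∈ Set.Icc (m 0 - 2 * L) (m 0 + 2 * L) :=
      Set.mem_Icc_iff_abs_le.1 (by
        rw [abs_sub_comm]
        exact hF.abs_expect_decomposeFin_sub_le hL p)
    calc 𝔼 σ, Real.exp (t * (F σ - 𝔼 τ, F τ))
        = 𝔼 p, 𝔼 e, Real.exp (t * (F (decomposeFin.symm (p, e)) - 𝔼 p, m p)) := by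
          rw [expect_perm_fin_succ, mean_eq]
      _ = 𝔼 p, Real.exp (t * (m p - 𝔼 p, m p)) *
            𝔼 e, Real.exp (t * (F (decomposeFin.symm (p, e)) - m p)) := by
          refine expect_congr rfl fun p _ => ?_
          rw [mul_expect]
          refine expect_congr rfl fun e _ => ?_
          rw [← Real.exp_add]
          ring_nf
      _ ≤ 𝔼 p, Real.exp (t * (m p - 𝔼 p, m p)) * Real.exp (2 * n * t ^ 2 * L ^ 2) :=
          expect_le_expect fun p _ => by gcongr; exact ih (hF.comp_decomposeFin_symm hL p)
      _ ≤ Real.exp ((m 0 + 2 * L - (m 0 - 2 * L)) ^ 2 * t ^ 2 / 8) *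
            Real.exp (2 * n * t ^ 2 * L ^ 2) := by
          rw [← expect_mul]
          gcongr
          exact expect_exp_mul_sub_expect_le m_mem t
      _ = Real.exp (2 * ↑(n + 1) * t ^ 2 * L ^ 2) := by
          rw [← Real.exp_add]
          push_cast
          ring_nf

theorem pow_two_mul_le_factorial_mul_exp_add_exp_neg (x : ℝ) (k : ℕ) :
    x ^ (2 * k) ≤ (2 * k).factorial * (Real.exp x + Real.exp (-x)) := by
  have h := Real.pow_div_factorial_le_exp |x| (abs_nonneg x) (2 * k)
  rw [div_le_iff₀' (by positivity), (even_two_mul k).pow_abs] at h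
  refine h.trans ?_
  gcongr
  rcases abs_choice x with hx | hx <;> rw [hx] <;> linarith [Real.exp_pos x, Real.exp_pos (-x)]

theorem IsHammingLipschitz.expect_sub_expect_pow_le (hL : 0 ≤ L) {F : Perm (Fin n) → ℝ}
    (hF : IsHammingLipschitz L F) (k : ℕ) :
    𝔼 σ, (F σ - 𝔼 τ, F τ) ^ (2 * k) ≤ (2 * k).factorial * (2 * Real.exp (2 * (n * L ^ 2))) := by
  have exp_pos := hF.expect_exp_le hL 1
  have exp_neg := hF.expect_exp_le hL (-1)
  simp only [one_mul, neg_one_mul, one_pow, neg_one_sq, mul_one] at exp_pos exp_neg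
  rw [mul_assoc] at exp_pos exp_neg
  calc 𝔼 σ, (F σ - 𝔼 τ, F τ) ^ (2 * k)
      ≤ 𝔼 σ, (2 * k).factorial * (Real.exp (F σ - 𝔼 τ, F τ) + Real.exp (-(F σ - 𝔼 τ, F τ))) :=
        expect_le_expect fun σ _ => pow_two_mul_le_factorial_mul_exp_add_exp_neg _ k
    _ ≤ (2 * k).factorial * (2 * Real.exp (2 * (n * L ^ 2))) := by
        rw [← mul_expect, expect_add_distrib]
        gcongr
        linarith

theorem IsHammingLipschitz.expect_pow_le (hL : 0 ≤ L) {F : Perm (Fin n) → ℝ}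
    (hF : IsHammingLipschitz L F) {A B : ℝ} (hA : n * L ^ 2 ≤ A) (hB : |𝔼 σ, F σ| ≤ B) (k : ℕ) :
    𝔼 σ, F σ ^ (2 * k) ≤
      2 ^ (2 * k - 1) * ((2 * k).factorial * (2 * Real.exp (2 * A)) + B ^ (2 * k)) := by
  set μ := 𝔼 σ, F σ
  calc 𝔼 σ, F σ ^ (2 * k)
      ≤ 𝔼 σ, 2 ^ (2 * k - 1) * ((F σ - μ) ^ (2 * k) + μ ^ (2 * k)) :=
        expect_le_expect fun σ _ => by
          simpa using (even_two_mul k).add_pow_le (a := F σ - μ) (b := μ)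
    _ = 2 ^ (2 * k - 1) * (𝔼 σ, (F σ - μ) ^ (2 * k) + μ ^ (2 * k)) := by
        rw [← mul_expect, expect_add_distrib, Fintype.expect_const]
    _ ≤ 2 ^ (2 * k - 1) * ((2 * k).factorial * (2 * Real.exp (2 * A)) + B ^ (2 * k)) := by
        rw [← (even_two_mul k).pow_abs μ]
        gcongr
        exact (hF.expect_sub_expect_pow_le hL k).trans (by gcongr)

end Concentration

section PermSum

open Equiv

variable {α : Type*} [Fintype α]

/-- The diagonal sum of the matrix `a` with columns permuted by `σ`. Spearman's metric is the case
`a i u = |u - i| ^ q`. -/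
def permSum (a : α → α → ℝ) (σ : Perm α) : ℝ :=
  ∑ k, a k (σ k)

/-- The change of `permSum a` when the images `u` of `i` and `v` of `j` are exchanged. -/
def exchangeDiff (a : α → α → ℝ) (i j u v : α) : ℝ :=
  a i v + a j u - a i u - a j v

variable [DecidableEq α]

theorem isHammingLipschitz_permSum {a : α → α → ℝ} {L : ℝ} (ha : ∀ k u v, |a k u - a k v| ≤ L) :
    IsHammingLipschitz L (permSum a) := by
  intro σ τ
  have term_le (k : α) : |a k (σ k) - a k (τ k)| ≤ if σ k ≠ τ k then L else 0 := by
    split_ifs with h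
    · exact ha _ _ _
    · simp [not_not.1 h]
  calc |permSum a σ - permSum a τ| ≤ ∑ k, |a k (σ k) - a k (τ k)| := by
        rw [permSum, permSum, ← sum_sub_distrib]
        exact abs_sum_le_sum_abs _ _
    _ ≤ ∑ k, if σ k ≠ τ k then L else 0 := sum_le_sum fun k _ => term_le k
    _ = L * hammingDist ⇑σ ⇑τ := by
        rw [← sum_filter, sum_const, nsmul_eq_mul, mul_comm]
        rfl

theorem permSum_mul_swap_sub (a : α → α → ℝ) (σ : Perm α) (i j : α) :
    permSum a (σ * swap i j) - permSum a σ = exchangeDiff a i j (σ i) (σ j) := by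
  rcases eq_or_ne i j with rfl | hij
  · simp [exchangeDiff, ← Perm.one_def]
  have hzero : ∀ k, k ≠ i ∧ k ≠ j → a k ((σ * swap i j) k) - a k (σ k) = 0 := by
    rintro k ⟨hki, hkj⟩
    rw [Perm.mul_apply, swap_apply_of_ne_of_ne hki hkj, sub_self]
  rw [permSum, permSum, ← sum_sub_distrib, Fintype.sum_eq_add i j hij hzero]
  simp only [Perm.mul_apply, swap_apply_left, swap_apply_right, exchangeDiff]
  ring

theorem expect_perm_apply (i : α) (f : α → ℝ) : 𝔼 σ : Perm α, f (σ i) = 𝔼 u, f u :=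
  expect_smul_eq_expect_of_coe_eq_orbit (x := i) (by
    rw [MulAction.orbit_eq_univ, coe_univ]) f

theorem expect_perm_apply_apply {i j : α} (hij : i ≠ j) (f : α → α → ℝ) :
    𝔼 σ : Perm α, f (σ i) (σ j) = 𝔼 y ∈ univ.offDiag, f y.1 y.2 := by
  have coe_eq_orbit : ((univ : Finset α).offDiag : Set (α × α)) =
      MulAction.orbit (Perm α) (i, j) := by
    ext ⟨u, v⟩
    rw [mem_coe, mem_offDiag, MulAction.mem_orbit_iff]
    constructor
    · rintro ⟨-, -, huv⟩
      obtain ⟨σ, hσi, hσj⟩ := MulAction.is_two_pretransitive_iff.1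
        (Perm.isMultiplyPretransitive α 2) hij huv
      exact ⟨σ, Prod.ext hσi hσj⟩
    · rintro ⟨σ, hσ⟩
      obtain ⟨rfl, rfl⟩ := Prod.ext_iff.1 hσ
      exact ⟨mem_univ _, mem_univ _, σ.injective.ne hij⟩
  exact expect_smul_eq_expect_of_coe_eq_orbit coe_eq_orbit fun y => f y.1 y.2

theorem sum_exchangeDiff_eq (a : α → α → ℝ) (σ : Perm α) :
    ∑ i, ∑ j, exchangeDiff a i j (σ i) (σ j) =
      -(2 * Fintype.card α * (permSum a σ - 𝔼 τ, permSum a τ)) := by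
  have card_mul_mean : Fintype.card α * 𝔼 τ, permSum a τ = ∑ i, ∑ u, a i u := by
    simp only [permSum, expect_sum_comm, expect_perm_apply, mul_sum, Fintype.card_mul_expect]
  have sum_apply (i : α) : ∑ j, a i (σ j) = ∑ u, a i u := Equiv.sum_comp σ (a i)
  have sum_apply' : ∑ i, ∑ j, a j (σ i) = ∑ i, ∑ u, a i u := by
    rw [sum_comm]
    simp only [sum_apply]
  simp only [exchangeDiff, sum_add_distrib, sum_sub_distrib, sum_apply, sum_apply', sum_const,
    card_univ, nsmul_eq_mul, ← mul_sum]
  rw [← permSum]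
  linear_combination -2 * card_mul_mean

-- `σ` and `σ * swap i j` form an exchangeable pair.
theorem expect_exchangeDiff_mul_permSum (a : α → α → ℝ) (i j : α) :
    𝔼 σ : Perm α, exchangeDiff a i j (σ i) (σ j) * permSum a σ =
      -(𝔼 σ : Perm α, exchangeDiff a i j (σ i) (σ j) ^ 2) / 2 := by
  have expect_mul_swap (g : Perm α → ℝ) : 𝔼 σ, g (σ * swap i j) = 𝔼 σ, g σ :=
    Fintype.expect_equiv (Equiv.mulRight (swap i j)) _ _ fun _ => rfl
  have hsq := expect_mul_swap fun σ => permSum a σ ^ 2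
  simp only [← permSum_mul_swap_sub]
  have expand (σ : Perm α) : (permSum a (σ * swap i j) - permSum a σ) * permSum a σ =
      permSum a (σ * swap i j) ^ 2 / 2 - permSum a σ ^ 2 / 2 -
        (permSum a (σ * swap i j) - permSum a σ) ^ 2 / 2 := by ring
  simp only [expand, expect_sub_distrib, ← expect_div, hsq]
  ring

theorem four_mul_card_mul_expect_permSum_sub_sq (a : α → α → ℝ) :
    4 * Fintype.card α * 𝔼 σ, (permSum a σ - 𝔼 τ, permSum a τ) ^ 2 =
      ∑ i, ∑ j, 𝔼 σ : Perm α, exchangeDiff a i j (σ i) (σ j) ^ 2 := by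
  set μ := 𝔼 τ, permSum a τ with hμ
  have centred : 𝔼 σ, (permSum a σ - μ) = 0 := by
    rw [expect_sub_distrib, Fintype.expect_const, hμ, sub_self]
  have pairing : ∑ i, ∑ j, 𝔼 σ : Perm α, exchangeDiff a i j (σ i) (σ j) * permSum a σ =
      -(2 * Fintype.card α * 𝔼 σ, (permSum a σ - μ) ^ 2) := by
    calc ∑ i, ∑ j, 𝔼 σ : Perm α, exchangeDiff a i j (σ i) (σ j) * permSum a σ
        = 𝔼 σ, (∑ i, ∑ j, exchangeDiff a i j (σ i) (σ j)) * permSum a σ := by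
          simp only [← expect_sum_comm, sum_mul]
      _ = 𝔼 σ, -(2 * Fintype.card α *
            ((permSum a σ - μ) ^ 2 + μ * (permSum a σ - μ))) :=
          expect_congr rfl fun σ _ => by rw [sum_exchangeDiff_eq]; ring
      _ = -(2 * Fintype.card α * 𝔼 σ, (permSum a σ - μ) ^ 2) := by
          rw [expect_neg_distrib, ← mul_expect, expect_add_distrib, ← mul_expect, centred, mul_zero,
            add_zero]
  simp only [expect_exchangeDiff_mul_permSum, ← sum_div, sum_neg_distrib] at pairing
  linarith

theorem card_mul_card_mul_sq_le_expect_exchangeDiff_sq {a : α → α → ℝ} {s t : Finset α}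
    (hst : Disjoint s t) {D : ℝ} {i j : α} (hij : i ≠ j)
    (hD : ∀ u ∈ s, ∀ v ∈ t, D ^ 2 ≤ exchangeDiff a i j u v ^ 2) :
    #s * #t * D ^ 2 ≤
      Fintype.card α ^ 2 * 𝔼 σ : Perm α, exchangeDiff a i j (σ i) (σ j) ^ 2 := by
  have hsub : s ×ˢ t ⊆ univ.offDiag := fun y hy => by
    rw [mem_product] at hy
    exact mem_offDiag.2 ⟨mem_univ _, mem_univ _, fun h => disjoint_left.1 hst hy.1 (h ▸ hy.2)⟩
  have card_le : (#(univ : Finset α).offDiag : ℝ) ≤ Fintype.card α ^ 2 := by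
    rw [offDiag_card, card_univ, sq]
    exact_mod_cast Nat.sub_le _ _
  calc (#s * #t * D ^ 2 : ℝ) = ∑ _y ∈ s ×ˢ t, D ^ 2 := by
        rw [sum_const, card_product, nsmul_eq_mul]
        push_cast
        ring
    _ ≤ ∑ y ∈ s ×ˢ t, exchangeDiff a i j y.1 y.2 ^ 2 :=
        sum_le_sum fun y hy => hD _ (mem_product.1 hy).1 _ (mem_product.1 hy).2
    _ ≤ ∑ y ∈ univ.offDiag, exchangeDiff a i j y.1 y.2 ^ 2 :=
        sum_le_sum_of_subset_of_nonneg hsub fun _ _ _ => sq_nonneg _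
    _ = #(univ : Finset α).offDiag * 𝔼 σ : Perm α, exchangeDiff a i j (σ i) (σ j) ^ 2 := by
        rw [expect_perm_apply_apply hij fun u v => exchangeDiff a i j u v ^ 2, card_mul_expect]
    _ ≤ _ := by gcongr

theorem card_sq_mul_card_sq_mul_sq_le_expect_permSum_sub_sq {a : α → α → ℝ} {s t : Finset α}
    (hst : Disjoint s t) {D : ℝ}
    (hD : ∀ i ∈ s, ∀ j ∈ t, ∀ u ∈ s, ∀ v ∈ t, D ^ 2 ≤ exchangeDiff a i j u v ^ 2) :
    #s ^ 2 * #t ^ 2 * D ^ 2 ≤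
      4 * Fintype.card α ^ 3 * 𝔼 σ, (permSum a σ - 𝔼 τ, permSum a τ) ^ 2 := by
  let V (i j : α) : ℝ := 𝔼 σ : Perm α, exchangeDiff a i j (σ i) (σ j) ^ 2
  have V_nonneg (i j : α) : 0 ≤ V i j := expect_nonneg fun _ _ => sq_nonneg _
  calc (#s ^ 2 * #t ^ 2 * D ^ 2 : ℝ) = ∑ _i ∈ s, ∑ _j ∈ t, (#s * #t * D ^ 2 : ℝ) := by
        simp only [sum_const, nsmul_eq_mul]
        ring
    _ ≤ ∑ i ∈ s, ∑ j ∈ t, Fintype.card α ^ 2 * V i j :=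
        sum_le_sum fun i hi => sum_le_sum fun j hj =>
          card_mul_card_mul_sq_le_expect_exchangeDiff_sq hst
            (fun h => disjoint_left.1 hst hi (h ▸ hj)) (hD i hi j hj)
    _ ≤ Fintype.card α ^ 2 * ∑ i, ∑ j, V i j := by
        simp only [← mul_sum]
        gcongr
        refine (sum_le_sum fun i _ => ?_).trans
          (sum_le_univ_sum_of_nonneg fun i => sum_nonneg fun j _ => V_nonneg i j)
        exact sum_le_univ_sum_of_nonneg (V_nonneg i)
    _ = _ := by
        rw [← four_mul_card_mul_expect_permSum_sub_sq]
        ring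

end PermSum

section Spearman

/-- The cost matrix `|u - i| ^ q` of Spearman's metric, so that `rhoq q = permSum (spearmanCost q)`
definitionally. -/
noncomputable def spearmanCost (q : ℝ) {n : ℕ} (i u : Fin n) : ℝ :=
  |((u : ℕ) : ℝ) - ((i : ℕ) : ℝ)| ^ q

variable {q : ℝ} {n : ℕ}

theorem spearmanCost_le_rpow (hq : 0 ≤ q) (i u : Fin n) : spearmanCost q i u ≤ (n : ℝ) ^ q := by
  have hi : ((i : ℕ) : ℝ) ≤ n := by exact_mod_cast i.2.le
  have hu : ((u : ℕ) : ℝ) ≤ n := by exact_mod_cast u.2.le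
  exact Real.rpow_le_rpow (abs_nonneg _)
    (abs_sub_le_of_nonneg_of_le (Nat.cast_nonneg _) hu (Nat.cast_nonneg _) hi) hq

theorem isHammingLipschitz_rhoq (hq : 0 ≤ q) :
    IsHammingLipschitz ((n : ℝ) ^ q) (rhoq q (n := n)) :=
  isHammingLipschitz_permSum (a := spearmanCost q) fun k u v =>
    abs_sub_le_of_nonneg_of_le (Real.rpow_nonneg (abs_nonneg _) q) (spearmanCost_le_rpow hq k u)
      (Real.rpow_nonneg (abs_nonneg _) q) (spearmanCost_le_rpow hq k v)

-- Exchanging images between two short blocks at opposite ends of `{0, …, n - 1}` replaces two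
-- short displacements by two long ones.
theorem two_mul_rpow_le_exchangeDiff_spearmanCost (hq : 0 ≤ q) {r m : ℕ} (hr : 2 ≤ (r : ℝ) ^ q)
    (hm : (r + 2) * m ≤ n) {i j u v : Fin n} (hi : (i : ℕ) < m) (hu : (u : ℕ) < m)
    (hj : n ≤ j + m) (hv : n ≤ v + m) :
    2 * (m : ℝ) ^ q ≤ exchangeDiff (spearmanCost q) i j u v := by
  have within {x y : Fin n} (hxy : (x : ℕ) ≤ y + m) (hyx : (y : ℕ) ≤ x + m) :
      spearmanCost q x y ≤ (m : ℝ) ^ q := by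
    have hxy' : ((x : ℕ) : ℝ) ≤ (y : ℕ) + m := by exact_mod_cast hxy
    have hyx' : ((y : ℕ) : ℝ) ≤ (x : ℕ) + m := by exact_mod_cast hyx
    exact Real.rpow_le_rpow (abs_nonneg _) (abs_le.2 ⟨by linarith, by linarith⟩) hq
  have across {x y : Fin n} (hx : (x : ℕ) < m) (hy : n ≤ y + m) :
      2 * (m : ℝ) ^ q ≤ |((y : ℕ) : ℝ) - ((x : ℕ) : ℝ)| ^ q := by
    have hgap : (r : ℝ) * m + (x : ℕ) ≤ (y : ℕ) := by
      have : r * m + x ≤ y := by linarith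
      exact_mod_cast this
    calc 2 * (m : ℝ) ^ q ≤ (r : ℝ) ^ q * (m : ℝ) ^ q := by gcongr
      _ = ((r : ℝ) * m) ^ q := (Real.mul_rpow r.cast_nonneg m.cast_nonneg).symm
      _ ≤ _ := Real.rpow_le_rpow (by positivity) (le_abs.2 (.inl (by linarith))) hq
  have hiv : 2 * (m : ℝ) ^ q ≤ spearmanCost q i v := across hi hv
  have hju : 2 * (m : ℝ) ^ q ≤ spearmanCost q j u := by
    rw [spearmanCost, abs_sub_comm]
    exact across hu hj
  have hiu := within (x := i) (y := u) (by omega) (by omega)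
  have hjv := within (x := j) (y := v) (by omega) (by omega)
  rw [exchangeDiff]
  linarith

theorem VarN_eq_expect (g : Equiv.Perm (Fin n) → ℝ) :
    VarN g = 𝔼 σ, (g σ - 𝔼 τ, g τ) ^ 2 := by
  rw [VarN, En_eq_expect, En_eq_expect]

theorem pow_mul_rpow_sq_le_VarN_rhoq (hq : 0 ≤ q) {r m : ℕ} (hr : 2 ≤ (r : ℝ) ^ q)
    (hm : (r + 2) * m ≤ n) :
    (m : ℝ) ^ 4 * ((m : ℝ) ^ q) ^ 2 ≤ (n : ℝ) ^ 3 * VarN (rhoq q (n := n)) := by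
  have hmn : 2 * m ≤ n := (Nat.mul_le_mul_right m (by omega)).trans hm
  let low : Finset (Fin n) := {i | (i : ℕ) < m}
  let high : Finset (Fin n) := low.map Fin.revPerm.toEmbedding
  have mem_low {i : Fin n} : i ∈ low ↔ (i : ℕ) < m := mem_filter_univ i
  have le_of_mem_high {j : Fin n} (hj : j ∈ high) : n ≤ j + m := by
    obtain ⟨i, hi, rfl⟩ := mem_map.1 hj
    have := mem_low.1 hi
    simp only [Equiv.coe_toEmbedding, Fin.revPerm_apply, Fin.val_rev]
    omega
  have card_low : #low = m := by
    rw [Fin.card_filter_val_lt]; omega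
  have card_high : #high = m := by rw [card_map, card_low]
  have hdisj : Disjoint low high := disjoint_left.2 fun i hi hi' => by
    have := mem_low.1 hi
    have := le_of_mem_high hi'
    omega
  have key := card_sq_mul_card_sq_mul_sq_le_expect_permSum_sub_sq (a := spearmanCost q) hdisj
    (D := 2 * (m : ℝ) ^ q) fun i hi j hj u hu v hv => by
      gcongr
      exact two_mul_rpow_le_exchangeDiff_spearmanCost hq hr hm (mem_low.1 hi) (mem_low.1 hu)
        (le_of_mem_high hj) (le_of_mem_high hv)
  have hvar : 𝔼 σ, (permSum (spearmanCost q) σ - 𝔼 τ, permSum (spearmanCost q) τ) ^ 2 =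
      VarN (rhoq q (n := n)) := (VarN_eq_expect _).symm
  rw [card_low, card_high, Fintype.card_fin, hvar] at key
  linarith

theorem exists_mul_rpow_sq_le_mul_VarN_rhoq (hq : 0 < q) :
    ∃ S : ℝ, ∀ᶠ n : ℕ in atTop, n * ((n : ℝ) ^ q) ^ 2 ≤ S * VarN (rhoq q (n := n)) := by
  obtain ⟨r, hr⟩ : ∃ r : ℕ, 2 ≤ (r : ℝ) ^ q :=
    (((tendsto_rpow_atTop hq).comp tendsto_natCast_atTop_atTop).eventually_ge_atTop 2).exists
  set s : ℝ := 2 * (r + 2) with hs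
  refine ⟨s ^ 4 * (s ^ q) ^ 2, ?_⟩
  filter_upwards [eventually_ge_atTop (r + 2)] with n hn
  set m := n / (r + 2)
  have hmn : (r + 2) * m ≤ n := Nat.mul_div_le n (r + 2)
  have hns : (n : ℝ) ≤ s * m := by
    have hm1 : 1 ≤ m := (Nat.one_le_div_iff (by omega)).2 hn
    have hlt : n < (r + 2) * (m + 1) := Nat.lt_mul_div_succ n (by omega)
    have : n ≤ 2 * (r + 2) * m := by nlinarith
    rw [hs]
    exact_mod_cast this
  have hn0 : (0 : ℝ) < n := by
    have : 0 < n := by omega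
    exact_mod_cast this
  refine le_of_mul_le_mul_left ?_ (pow_pos hn0 3)
  calc (n : ℝ) ^ 3 * (n * ((n : ℝ) ^ q) ^ 2) = (n : ℝ) ^ 4 * ((n : ℝ) ^ q) ^ 2 := by ring
    _ ≤ (s * m) ^ 4 * ((s * m) ^ q) ^ 2 := by gcongr
    _ = s ^ 4 * (s ^ q) ^ 2 * ((m : ℝ) ^ 4 * ((m : ℝ) ^ q) ^ 2) := by
        rw [Real.mul_rpow (by positivity) m.cast_nonneg]; ring
    _ ≤ s ^ 4 * (s ^ q) ^ 2 * ((n : ℝ) ^ 3 * VarN (rhoq q (n := n))) := by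
        gcongr ?_ * ?_
        exact pow_mul_rpow_sq_le_VarN_rhoq hq.le hr hmn
    _ = (n : ℝ) ^ 3 * (s ^ 4 * (s ^ q) ^ 2 * VarN (rhoq q (n := n))) := by ring

theorem En_rhoqBar : En (rhoqBar q (n := n)) = 0 := by
  simp only [En_eq_expect, rhoqBar, ← expect_div, expect_sub_distrib, Fintype.expect_const,
    sub_self, zero_div]

theorem exists_isHammingLipschitz_rhoqBar (hq : 0 < q) :
    ∃ K : ℝ, 0 ≤ K ∧ ∀ᶠ n : ℕ in atTop, IsHammingLipschitz (K / √n) (rhoqBar q (n := n)) := by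
  obtain ⟨S, hS⟩ := exists_mul_rpow_sq_le_mul_VarN_rhoq hq
  refine ⟨√S, Real.sqrt_nonneg S, ?_⟩
  filter_upwards [hS, eventually_gt_atTop 0] with n hSn hn σ τ
  have hn0 : (0 : ℝ) < n := by exact_mod_cast hn
  have hvar_nonneg : 0 ≤ VarN (rhoq q (n := n)) := by
    rw [VarN_eq_expect]
    exact expect_nonneg fun _ _ => sq_nonneg _
  have hvar_pos : 0 < VarN (rhoq q (n := n)) := by
    refine hvar_nonneg.lt_of_ne' fun h => ?_
    rw [h, mul_zero] at hSn
    exact hSn.not_gt (by positivity)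
  have hsqrt : √n * (n : ℝ) ^ q ≤ √S * √(VarN (rhoq q (n := n))) := by
    rw [← Real.sqrt_mul' _ hvar_nonneg, ← Real.sqrt_sq (Real.rpow_nonneg n.cast_nonneg q),
      ← Real.sqrt_mul n.cast_nonneg]
    exact Real.sqrt_le_sqrt hSn
  have hratio : (n : ℝ) ^ q / √(VarN (rhoq q (n := n))) ≤ √S / √n := by
    rw [div_le_div_iff₀ (Real.sqrt_pos.2 hvar_pos) (Real.sqrt_pos.2 hn0), mul_comm]
    exact hsqrt
  calc |rhoqBar q σ - rhoqBar q τ| = |rhoq q σ - rhoq q τ| / √(VarN (rhoq q (n := n))) := by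
        rw [rhoqBar, rhoqBar, ← sub_div, sub_sub_sub_cancel_right, abs_div,
          abs_of_nonneg (Real.sqrt_nonneg _)]
    _ ≤ (n : ℝ) ^ q * hammingDist ⇑σ ⇑τ / √(VarN (rhoq q (n := n))) := by
        gcongr
        exact isHammingLipschitz_rhoq hq.le σ τ
    _ = (n : ℝ) ^ q / √(VarN (rhoq q (n := n))) * hammingDist ⇑σ ⇑τ := by ring
    _ ≤ √S / √n * hammingDist ⇑σ ⇑τ := by gcongr

end Spearman

section TestFunctions

theorem exists_abs_sub_le_add_mul_dist_of_isCompact {X : Type*} [PseudoMetricSpace X] {s : Set X}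
    (hs : IsCompact s) {f : X → ℝ} (hf : ContinuousOn f s) {δ : ℝ} (hδ : 0 < δ) :
    ∃ M : ℝ, 0 ≤ M ∧ ∀ x ∈ s, ∀ y ∈ s, |f x - f y| ≤ δ + M * dist x y := by
  obtain ⟨C, hC⟩ := hs.exists_bound_of_continuousOn hf
  obtain ⟨r, hr, hclose⟩ :=
    Metric.uniformContinuousOn_iff.1 (hs.uniformContinuousOn_of_continuous hf) δ hδ
  refine ⟨2 * |C| / r, by positivity, fun x hx y hy => ?_⟩
  rcases lt_or_ge (dist x y) r with hxy | hxy
  · have hlt : |f x - f y| < δ := hclose x hx y hy hxy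
    have : 0 ≤ 2 * |C| / r * dist x y := by positivity
    linarith
  · have hfx : |f x| ≤ |C| := (hC x hx).trans (le_abs_self C)
    have hfy : |f y| ≤ |C| := (hC y hy).trans (le_abs_self C)
    calc |f x - f y| ≤ 2 * |C| := by linarith [abs_sub (f x) (f y)]
      _ = 2 * |C| / r * r := by field_simp
      _ ≤ 2 * |C| / r * dist x y := by gcongr
      _ ≤ δ + 2 * |C| / r * dist x y := by linarith

theorem exists_forall_mul_one_add_pow_le (C : ℝ) (m : ℕ) {δ : ℝ} (hδ : 0 < δ) :
    ∃ R : ℝ, ∀ z ≥ R, C * (1 + z ^ m) ≤ δ * z ^ (2 * (m + 1)) := by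
  refine ⟨max 1 (2 * |C| / δ), fun z hz => ?_⟩
  have hz1 : 1 ≤ z := (le_max_left _ _).trans hz
  have hzC : 2 * |C| ≤ z * δ := (div_le_iff₀ hδ).1 ((le_max_right _ _).trans hz)
  calc C * (1 + z ^ m) ≤ |C| * (z ^ m + z ^ m) := by
        gcongr
        exacts [le_abs_self C, one_le_pow₀ hz1]
    _ = 2 * |C| * z ^ m := by ring
    _ ≤ z * δ * z ^ m := by gcongr
    _ = δ * z ^ (m + 1) := by ring
    _ ≤ δ * z ^ (2 * (m + 1)) := by
        gcongr
        omega

theorem exists_abs_sub_le_of_continuous_of_growth {f : ℝ → ℝ} (hf : Continuous f) {C : ℝ} {m : ℕ}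
    (hC : ∀ x, |f x| ≤ C * (1 + |x| ^ m)) {δ : ℝ} (hδ : 0 < δ) :
    ∃ M : ℝ, 0 ≤ M ∧ ∀ x y, |f x - f y| ≤
      δ * (1 + x ^ (2 * (m + 1)) + y ^ (2 * (m + 1))) + M * |x - y| := by
  have hC0 : 0 ≤ C := by
    have := (abs_nonneg _).trans (hC 0)
    exact nonneg_of_mul_nonneg_left this (by positivity)
  obtain ⟨R, hR⟩ := exists_forall_mul_one_add_pow_le (2 * C) m hδ
  obtain ⟨M, hM, hball⟩ := exists_abs_sub_le_add_mul_dist_of_isCompact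
    (isCompact_closedBall (0 : ℝ) R) hf.continuousOn hδ
  have hpow (x : ℝ) : 0 ≤ δ * x ^ (2 * (m + 1)) :=
    mul_nonneg hδ.le ((even_two_mul _).pow_nonneg x)
  refine ⟨M, hM, fun x y => ?_⟩
  wlog hyx : |y| ≤ |x| generalizing x y
  · rw [abs_sub_comm (f x), abs_sub_comm x]
    linarith [this y x (le_of_not_ge hyx)]
  rcases le_total |x| R with hxR | hRx
  · have hclose : |f x - f y| ≤ δ + M * |x - y| :=
      hball x (by simpa using hxR) y (by simpa using hyx.trans hxR)
    linarith [hpow x, hpow y]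
  · have hfar : |f x - f y| ≤ δ * x ^ (2 * (m + 1)) :=
      calc |f x - f y| ≤ |f x| + |f y| := abs_sub _ _
        _ ≤ C * (1 + |x| ^ m) + C * (1 + |x| ^ m) :=
            add_le_add (hC x) ((hC y).trans (by gcongr))
        _ = 2 * C * (1 + |x| ^ m) := by ring
        _ ≤ δ * |x| ^ (2 * (m + 1)) := hR _ hRx
        _ = δ * x ^ (2 * (m + 1)) := by rw [(even_two_mul _).pow_abs]
    have : 0 ≤ M * |x - y| := by positivity
    linarith [hpow y]

end TestFunctions

section Comparison

open Asymptotics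

theorem isLittleO_harmonic_sqrt :
    (fun n : ℕ => (harmonic n : ℝ)) =o[atTop] fun n : ℕ => √(n : ℝ) := by
  have hlog : (fun n : ℕ => 1 + Real.log n) =o[atTop] fun n : ℕ => √(n : ℝ) := by
    have hlog' : (fun x : ℝ => 1 + Real.log x) =o[atTop] Real.sqrt := by
      simp only [funext Real.sqrt_eq_rpow]
      exact (isLittleO_const_left.2 <| .inr <| tendsto_norm_atTop_atTop.comp <|
        tendsto_rpow_atTop one_half_pos).add (isLittleO_log_rpow_atTop one_half_pos)
    exact hlog'.comp_tendsto tendsto_natCast_atTop_atTop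
  refine IsBigO.trans_isLittleO (.of_norm_le fun n => ?_) hlog
  have harmonic_nonneg : 0 ≤ harmonic n := sum_nonneg fun _ _ => by positivity
  rw [Real.norm_of_nonneg (by exact_mod_cast harmonic_nonneg)]
  exact harmonic_le_one_add_log n

theorem cycleCount_add_expect_cycleCount_le {n : ℕ} (τ : Equiv.Perm (Fin n)) :
    cycleCount τ + 𝔼 σ : Equiv.Perm (Fin n), (cycleCount σ : ℝ) ≤
      τ.partition.parts.card + harmonic n :=
  add_le_add (by exact_mod_cast cycleCount_le_card_parts_partition τ)
    (expect_cycleCount_le_harmonic n)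

theorem exists_expect_pow_le_and_expect_conj_pow_le (A B : ℝ) (k : ℕ) :
    ∃ Q : ℝ, 0 ≤ Q ∧ ∀ {n : ℕ} {L : ℝ} {F : Equiv.Perm (Fin n) → ℝ} (τ : Equiv.Perm (Fin n)),
      0 ≤ L → IsHammingLipschitz L F → n * L ^ 2 ≤ A → |𝔼 σ, F σ| ≤ B →
      L * (cycleCount τ + 𝔼 σ : Equiv.Perm (Fin n), (cycleCount σ : ℝ)) ≤ 1 →
      𝔼 σ, F σ ^ (2 * k) ≤ Q ∧ 𝔼 w, F (w * τ * w⁻¹) ^ (2 * k) ≤ Q := by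
  let bound (A B : ℝ) : ℝ := 2 ^ (2 * k - 1) * ((2 * k).factorial * (2 * Real.exp (2 * A)) +
    B ^ (2 * k))
  refine ⟨max 0 (max (bound A B) (bound (4 * A) (B + 1))), le_max_left _ _,
    fun τ hL hF hA hB hcycle => ⟨?_, ?_⟩⟩
  · exact ((hF.expect_pow_le hL hA hB k).trans (le_max_left _ _)).trans (le_max_right _ _)
  · have hmean := abs_le.1 ((hF.abs_expect_conj_sub_expect_le hL τ).trans hcycle)
    have hB' := abs_le.1 hB
    exact (((hF.comp_conj hL τ).expect_pow_le (by positivity) (by linarith)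
      (abs_le.2 ⟨by linarith, by linarith⟩) k).trans (le_max_right _ _)).trans (le_max_right _ _)

theorem tendsto_div_sqrt_mul_card_parts_add_harmonic
    {lam : ∀ n : ℕ, (Fintype.card (Fin n)).Partition}
    (hlam : (fun n => ((lam n).parts.card : ℝ)) =o[atTop] fun n : ℕ => √(n : ℝ)) (K : ℝ) :
    Tendsto (fun n : ℕ => K / √n * ((lam n).parts.card + harmonic n)) atTop (nhds 0) := by
  have hsum := ((hlam.add isLittleO_harmonic_sqrt).tendsto_div_nhds_zero).const_mul K
  rw [mul_zero] at hsum
  exact hsum.congr fun n => by ring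

theorem tendsto_EnCond_sub_En_of_isHammingLipschitz {F : ∀ n : ℕ, Equiv.Perm (Fin n) → ℝ}
    {K B : ℝ} (hK : 0 ≤ K) (hF : ∀ᶠ n : ℕ in atTop, IsHammingLipschitz (K / √n) (F n))
    (hB : ∀ᶠ n in atTop, |En (F n)| ≤ B) {lam : ∀ n : ℕ, (Fintype.card (Fin n)).Partition}
    (hlam : (fun n => ((lam n).parts.card : ℝ)) =o[atTop] fun n : ℕ => √(n : ℝ))
    {f : ℝ → ℝ} (hf : Continuous f)
    (hpoly : ∃ C : ℝ, ∃ m : ℕ, ∀ x : ℝ, |f x| ≤ C * (1 + |x| ^ m)) :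
    Tendsto (fun n => EnCond (lam n) (fun σ => f (F n σ)) - En (fun σ => f (F n σ)))
      atTop (nhds 0) := by
  obtain ⟨C, m, hC⟩ := hpoly
  obtain ⟨Q, hQ, hmoment⟩ := exists_expect_pow_le_and_expect_conj_pow_le (K ^ 2) B (m + 1)
  have hcost := tendsto_div_sqrt_mul_card_parts_add_harmonic hlam K
  refine Metric.tendsto_nhds.2 fun η hη => ?_
  obtain ⟨M, hM, hfM⟩ := exists_abs_sub_le_of_continuous_of_growth hf hC
    (δ := η / (2 * (1 + 2 * Q))) (by positivity)
  have hcostM := hcost.const_mul M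
  rw [mul_zero] at hcostM
  filter_upwards [hF, hB, hcost.eventually (gt_mem_nhds one_pos),
    hcostM.eventually (gt_mem_nhds (half_pos hη)), eventually_gt_atTop 0]
    with n hFn hBn hcost_one hcost_half hn
  obtain ⟨τ, hτ⟩ := exists_partition_eq (lam n)
  have hL : 0 ≤ K / √n := by positivity
  have hnL : n * (K / √n) ^ 2 ≤ K ^ 2 := by
    rw [div_pow, Real.sq_sqrt n.cast_nonneg, mul_div_cancel₀ _ (by positivity)]
  have hcycle : K / √n * (cycleCount τ + 𝔼 σ : Equiv.Perm (Fin n), (cycleCount σ : ℝ)) ≤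
      K / √n * ((lam n).parts.card + harmonic n) := by
    gcongr ?_ * ?_
    exact hτ ▸ cycleCount_add_expect_cycleCount_le τ
  rw [En_eq_expect] at hBn
  obtain ⟨hmom, hmom_conj⟩ := hmoment τ hL hFn hnL hBn (hcycle.trans hcost_one.le)
  rw [← hτ, EnCond_partition_eq_expect_conj, En_eq_expect, Real.dist_eq, sub_zero]
  calc _ ≤ η / (2 * (1 + 2 * Q)) * (1 + Q + Q) + M * (K / √n * ((lam n).parts.card + harmonic n)) :=
        (hFn.abs_expect_comp_conj_sub_expect_comp_le hL hM hfM τ).trans (by gcongr)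
    _ < η / (2 * (1 + 2 * Q)) * (1 + Q + Q) + η / 2 := by gcongr
    _ = η := by field_simp; ring

end Comparison

theorem isLittleO_sqrt_of_le_rpow {u : ℕ → ℝ} {ε : ℝ} (hε : ε < 1 / 2) (hu : ∀ n, 0 ≤ u n)
    (hle : ∀ n : ℕ, u n ≤ (n : ℝ) ^ ε) : u =o[atTop] fun n : ℕ => √(n : ℝ) := by
  have hrpow : (fun n : ℕ => (n : ℝ) ^ ε) =o[atTop] fun n : ℕ => √(n : ℝ) := by
    refine Asymptotics.isLittleO_of_tendsto' ?_ ?_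
    · filter_upwards [eventually_gt_atTop 0] with n hn hsqrt
      exact absurd hsqrt (by positivity)
    · refine ((tendsto_rpow_neg_atTop (sub_pos.2 hε)).comp tendsto_natCast_atTop_atTop).congr' ?_
      filter_upwards [eventually_gt_atTop 0] with n hn
      rw [Function.comp_apply, neg_sub, Real.rpow_sub (by positivity), Real.sqrt_eq_rpow]
  refine Asymptotics.IsBigO.trans_isLittleO (.of_norm_le fun n => ?_) hrpow
  rw [Real.norm_of_nonneg (hu n)]
  exact hle n

theorem condExp_rhoqBar_given_cycleType_tendsto_general {q : ℝ} (hq : 0 < q)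
    {lam : ∀ n : ℕ, (Fintype.card (Fin n)).Partition}
    (hlam : (fun n => ((lam n).parts.card : ℝ)) =o[atTop] fun n : ℕ => √(n : ℝ))
    {f : ℝ → ℝ} (hf : Continuous f)
    (hpoly : ∃ C : ℝ, ∃ m : ℕ, ∀ x : ℝ, |f x| ≤ C * (1 + |x| ^ m)) :
    Tendsto (fun n : ℕ =>
        EnCond (lam n) (fun σ => f (rhoqBar q σ)) -
          En (n := n) (fun σ => f (rhoqBar q σ)))
      atTop (nhds 0) := by
  obtain ⟨K, hK, hlip⟩ := exists_isHammingLipschitz_rhoqBar hq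
  refine tendsto_EnCond_sub_En_of_isHammingLipschitz (B := 0) hK hlip (.of_forall fun n => ?_)
    hlam hf hpoly
  rw [En_rhoqBar, abs_zero]

/-- For `1 ≤ q < ∞`, `0 < ε < 1/6` and partitions `λ^n ⊢ n` with at most `n^ε` parts,
the conditional expectation of `f(ρ̄_q)` given cycle type `λ^n` converges to the
unconditional expectation, for every continuous `f` of polynomial growth. -/
theorem condExp_rhoqBar_given_cycleType_tendsto (q : ℝ) (hq : 1 ≤ q)
    (ε : ℝ) (hε0 : 0 < ε) (hε : ε < 1 / 6)
    (lam : ∀ n : ℕ, (Fintype.card (Fin n)).Partition)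
    (hlam : ∀ n : ℕ, ((lam n).parts.card : ℝ) ≤ (n : ℝ) ^ ε)
    (f : ℝ → ℝ) (hf : Continuous f)
    (hpoly : ∃ C : ℝ, ∃ m : ℕ, ∀ x : ℝ, |f x| ≤ C * (1 + |x| ^ m)) :
    Tendsto (fun n : ℕ =>
        EnCond (lam n) (fun σ => f (rhoqBar q σ)) -
          En (n := n) (fun σ => f (rhoqBar q σ)))
      atTop (nhds 0) := by
  exact condExp_rhoqBar_given_cycleType_tendsto_general (by linarith)
    (isLittleO_sqrt_of_le_rpow (by linarith) (fun n => Nat.cast_nonneg _) hlam) hf hpoly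
end
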